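/- arXiv:2512.17706 — 2 statements merged into one kernel-verified Lean document; each statement's English description precedes it below -/
import Mathlib

section
/- Let D_A and D_B be bounded free spectrahedra (in g and h variables, over ℂ) and let (X, Y) ∈ (D_A × D_B)(n). Then: (i) (X, Y) is an Arveson extreme point of the free spectrahedron D_A × D_B if and only if X is an Arveson extreme point of D_A and Y is an Arveson extreme point of D_B; and (ii) (X, Y) is a Euclidean extreme point of the convex set (D_A × D_B)(n) if and only if X is an extreme point of D_A(n) and Y is an extreme point of D_B(n). -/
open Matrix
open scoped Kronecker ComplexOrder

/-- Membership in the level of the free spectrahedron determined by the Hermitian tuple `A`,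
at matrix size given by the index type `m`: all coordinates are Hermitian and
`I − Σ_i A_i ⊗ X_i ⪰ 0`. -/
def memD {ι : Type*} [Fintype ι] {d : Type*} [Fintype d] [DecidableEq d]
    {m : Type*} [Fintype m] [DecidableEq m]
    (A : ι → Matrix d d ℂ) (X : ι → Matrix m m ℂ) : Prop :=
  (∀ i, (X i).IsHermitian) ∧
    ((1 : Matrix (d × m) (d × m) ℂ) - ∑ i, A i ⊗ₖ X i).PosSemidef

/-- Boundedness of a free spectrahedron: every level is a bounded set. -/
def BoundedD {ι : Type*} [Fintype ι] {d : Type*} [Fintype d] [DecidableEq d]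
    (A : ι → Matrix d d ℂ) : Prop :=
  ∀ n : ℕ, ∃ C : ℝ, ∀ X : ι → Matrix (Fin n) (Fin n) ℂ,
    memD A X → ∀ i p q, ‖X i p q‖ ≤ C

/-- `Z` is an Arveson extreme point of `D_A`: any dilation of `Z` inside `D_A` is trivial. -/
def IsArvesonExtreme {ι : Type*} [Fintype ι] {d : Type*} [Fintype d] [DecidableEq d]
    {m : Type*} [Fintype m] [DecidableEq m]
    (A : ι → Matrix d d ℂ) (Z : ι → Matrix m m ℂ) : Prop :=
  memD A Z ∧
    ∀ r : ℕ, 1 ≤ r →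
      ∀ (β : ι → Matrix m (Fin r) ℂ) (γ : ι → Matrix (Fin r) (Fin r) ℂ),
        (∀ i, (γ i).IsHermitian) →
        memD A (fun i => Matrix.fromBlocks (Z i) (β i) (β i)ᴴ (γ i)) → β = 0

/-- The defining tuple of the Cartesian product `D_A × D_B`:
`(A_1⊕0, …, A_g⊕0, 0⊕B_1, …, 0⊕B_h)`. -/
def prodTuple {g h dA dB : ℕ}
    (A : Fin g → Matrix (Fin dA) (Fin dA) ℂ) (B : Fin h → Matrix (Fin dB) (Fin dB) ℂ) :
    Fin g ⊕ Fin h → Matrix (Fin dA ⊕ Fin dB) (Fin dA ⊕ Fin dB) ℂ :=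
  Sum.elim (fun i => Matrix.fromBlocks (A i) 0 0 0)
    (fun i => Matrix.fromBlocks 0 0 0 (B i))

/-! The pencil of `prodTuple A B` at `(X, Y)` is, up to a permutation of the index set, block
diagonal with the pencils of `A` at `X` and of `B` at `Y` as its blocks, so each level of the
product is the product of the levels. Extreme points of a product of convex sets are the pairs of
extreme points. An Arveson dilation of `X` alone extends to one of `(X, Y)` by dilating `Y` to
`Y ⊕ 0`, and conversely a dilation of `(X, Y)` restricts to dilations of `X` and of `Y`. -/

theorem posSemidef_fromBlocks_zero_iff {p q R : Type*} [Finite p] [Finite q] [Ring R]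
    [PartialOrder R] [StarRing R] [AddLeftMono R] {M : Matrix p p R} {N : Matrix q q R} :
    (fromBlocks M 0 0 N).PosSemidef ↔ M.PosSemidef ∧ N.PosSemidef := by
  refine ⟨fun h ↦ ⟨h.submatrix Sum.inl, h.submatrix Sum.inr⟩, fun ⟨hM, hN⟩ ↦ ?_⟩
  cases nonempty_fintype p
  cases nonempty_fintype q
  refine .of_dotProduct_mulVec_nonneg
    (hM.isHermitian.fromBlocks (conjTranspose_zero ..) hN.isHermitian) fun x ↦ ?_
  have hsum := add_nonneg (hM.dotProduct_mulVec_nonneg (x ∘ Sum.inl))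
    (hN.dotProduct_mulVec_nonneg (x ∘ Sum.inr))
  simpa [fromBlocks_mulVec, dotProduct, Fintype.sum_sum_type] using hsum

theorem sumElim_mem_extremePoints_iff {𝕜 ι κ E : Type*} [Ring 𝕜] [PartialOrder 𝕜]
    [IsOrderedRing 𝕜] [AddCommGroup E] [Module 𝕜 E] {s : Set (ι → E)} {t : Set (κ → E)}
    {x : ι → E} {y : κ → E} :
    Sum.elim x y ∈ Set.extremePoints 𝕜 {w | w ∘ Sum.inl ∈ s ∧ w ∘ Sum.inr ∈ t} ↔
      x ∈ Set.extremePoints 𝕜 s ∧ y ∈ Set.extremePoints 𝕜 t := by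
  let e := LinearEquiv.sumArrowLequivProdArrow ι κ 𝕜 E
  have himage : e '' {w | w ∘ Sum.inl ∈ s ∧ w ∘ Sum.inr ∈ t} = s ×ˢ t :=
    e.toEquiv.image_eq_preimage_symm _
  rw [← e.injective.mem_set_image, image_extremePoints, himage, extremePoints_prod]
  rfl

/-- The tuple `(A ⊕ 0, 0 ⊕ B)` defining the Cartesian product of two free spectrahedra, for
arbitrary index types; `prodTuple` is the case where they are all of the form `Fin k`. -/
def directSumTuple {ι κ d e R : Type*} [Zero R] (A : ι → Matrix d d R)
    (B : κ → Matrix e e R) : ι ⊕ κ → Matrix (d ⊕ e) (d ⊕ e) R :=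
  Sum.elim (fun i ↦ fromBlocks (A i) 0 0 0) (fun j ↦ fromBlocks 0 0 0 (B j))

/-- The tuple of block matrices `[X_i, β_i; β_i*, γ_i]`, a candidate dilation of `X` in the
definition of Arveson extreme points. -/
def dilation {ι m r R : Type*} [Star R] (X : ι → Matrix m m R) (β : ι → Matrix m r R)
    (γ : ι → Matrix r r R) : ι → Matrix (m ⊕ r) (m ⊕ r) R :=
  fun i ↦ fromBlocks (X i) (β i) (β i)ᴴ (γ i)

section Pencil

variable {ι κ d e m r R : Type*} [Fintype ι] [Fintype κ] [DecidableEq d] [DecidableEq e]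
  [DecidableEq m] [DecidableEq r] [Ring R]

/-- The value at `X` of the monic linear pencil `I − Σ_i A_i ⊗ X_i` with coefficients `A`; its
positive semidefiniteness locus is the free spectrahedron of `A`. -/
def monicPencil (A : ι → Matrix d d R) (X : ι → Matrix m m R) : Matrix (d × m) (d × m) R :=
  1 - ∑ i, A i ⊗ₖ X i

theorem monicPencil_directSumTuple (A : ι → Matrix d d R) (B : κ → Matrix e e R)
    (W : ι ⊕ κ → Matrix m m R) :
    (monicPencil (directSumTuple A B) W).submatrix
        (Equiv.sumProdDistrib d e m).symm (Equiv.sumProdDistrib d e m).symm =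
      fromBlocks (monicPencil A (W ∘ Sum.inl)) 0 0 (monicPencil B (W ∘ Sum.inr)) := by
  ext (⟨a, u⟩ | ⟨a, u⟩) (⟨b, v⟩ | ⟨b, v⟩) <;>
    simp [monicPencil, directSumTuple, Matrix.sum_apply, one_apply]

theorem monicPencil_fromBlocks_zero (A : ι → Matrix d d R) (X : ι → Matrix m m R)
    (Y : ι → Matrix r r R) :
    (monicPencil A fun i ↦ fromBlocks (X i) 0 0 (Y i)).submatrix
        (Equiv.prodSumDistrib d m r).symm (Equiv.prodSumDistrib d m r).symm =
      fromBlocks (monicPencil A X) 0 0 (monicPencil A Y) := by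
  ext (⟨a, u⟩ | ⟨a, u⟩) (⟨b, v⟩ | ⟨b, v⟩) <;>
    simp [monicPencil, Matrix.sum_apply, one_apply]

end Pencil

section FreeSpectrahedron

variable {ι κ d e m r : Type*} [Fintype ι] [Fintype κ] [Fintype d] [DecidableEq d]
  [Fintype e] [DecidableEq e] [Fintype m] [DecidableEq m] [Fintype r] [DecidableEq r]
  {A : ι → Matrix d d ℂ} {B : κ → Matrix e e ℂ} {X : ι → Matrix m m ℂ} {Y : κ → Matrix m m ℂ}

theorem memD_iff_posSemidef_monicPencil :
    memD A X ↔ (∀ i, (X i).IsHermitian) ∧ (monicPencil A X).PosSemidef :=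
  Iff.rfl

theorem memD_directSumTuple_iff {W : ι ⊕ κ → Matrix m m ℂ} :
    memD (directSumTuple A B) W ↔ memD A (W ∘ Sum.inl) ∧ memD B (W ∘ Sum.inr) := by
  simp only [memD_iff_posSemidef_monicPencil, Sum.forall, Function.comp_apply,
    ← posSemidef_submatrix_equiv (Equiv.sumProdDistrib d e m).symm, monicPencil_directSumTuple,
    posSemidef_fromBlocks_zero_iff]
  exact and_and_and_comm

theorem memD_zero : memD A (0 : ι → Matrix m m ℂ) := by
  simp [memD, PosSemidef.one]

theorem memD.fromBlocks_zero {Z : ι → Matrix r r ℂ} (hX : memD A X) (hZ : memD A Z) :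
    memD A fun i ↦ fromBlocks (X i) 0 0 (Z i) := by
  refine memD_iff_posSemidef_monicPencil.2
    ⟨fun i ↦ (hX.1 i).fromBlocks (conjTranspose_zero ..) (hZ.1 i), ?_⟩
  rw [← posSemidef_submatrix_equiv (Equiv.prodSumDistrib d m r).symm,
    monicPencil_fromBlocks_zero, posSemidef_fromBlocks_zero_iff]
  exact ⟨hX.2, hZ.2⟩

theorem memD.dilation_zero (hX : memD A X) :
    memD A (dilation X (0 : ι → Matrix m r ℂ) 0) := by
  unfold dilation
  simpa using hX.fromBlocks_zero (memD_zero (m := r))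

theorem isArvesonExtreme_iff_forall_dilation :
    IsArvesonExtreme A X ↔ memD A X ∧ ∀ (r : ℕ) (β : ι → Matrix m (Fin r) ℂ) γ,
      memD A (dilation X β γ) → β = 0 := by
  refine and_congr_right fun _ ↦ ⟨fun h r β γ hdil ↦ ?_, fun h r _ β γ _ ↦ h r β γ⟩
  rcases r.eq_zero_or_pos with rfl | hr
  · exact Subsingleton.elim _ _
  · exact h r hr β γ (fun i ↦ (isHermitian_fromBlocks_iff.1 (hdil.1 i)).2.2.2) hdil

theorem memD_directSumTuple_dilation_sumElim_iff
    {β₁ : ι → Matrix m r ℂ} {γ₁ : ι → Matrix r r ℂ}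
    {β₂ : κ → Matrix m r ℂ} {γ₂ : κ → Matrix r r ℂ} :
    memD (directSumTuple A B) (dilation (Sum.elim X Y) (Sum.elim β₁ β₂) (Sum.elim γ₁ γ₂)) ↔
      memD A (dilation X β₁ γ₁) ∧ memD B (dilation Y β₂ γ₂) :=
  memD_directSumTuple_iff

theorem isArvesonExtreme_directSumTuple_iff :
    IsArvesonExtreme (directSumTuple A B) (Sum.elim X Y) ↔
      IsArvesonExtreme A X ∧ IsArvesonExtreme B Y := by
  simp only [isArvesonExtreme_iff_forall_dilation]
  constructor
  · rintro ⟨hXY, htriv⟩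
    obtain ⟨hX, hY⟩ := memD_directSumTuple_iff.1 hXY
    refine ⟨⟨hX, fun r β γ hdil ↦ ?_⟩, ⟨hY, fun r β γ hdil ↦ ?_⟩⟩
    · have hzero := htriv r (Sum.elim β 0) (Sum.elim γ 0)
        (memD_directSumTuple_dilation_sumElim_iff.2 ⟨hdil, hY.dilation_zero⟩)
      exact congrArg (· ∘ Sum.inl) hzero
    · have hzero := htriv r (Sum.elim 0 β) (Sum.elim 0 γ)
        (memD_directSumTuple_dilation_sumElim_iff.2 ⟨hX.dilation_zero, hdil⟩)
      exact congrArg (· ∘ Sum.inr) hzero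
  · rintro ⟨⟨hX, htrivX⟩, ⟨hY, htrivY⟩⟩
    refine ⟨memD_directSumTuple_iff.2 ⟨hX, hY⟩, fun r β γ hdil ↦ ?_⟩
    obtain ⟨hdilX, hdilY⟩ := memD_directSumTuple_iff.1 hdil
    have hinl : β ∘ Sum.inl = 0 := htrivX r _ (γ ∘ Sum.inl) hdilX
    have hinr : β ∘ Sum.inr = 0 := htrivY r _ (γ ∘ Sum.inr) hdilY
    rw [← Sum.elim_comp_inl_inr β, hinl, hinr, Sum.elim_zero_zero]

theorem mem_extremePoints_directSumTuple_iff :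
    Sum.elim X Y ∈ Set.extremePoints ℝ {W | memD (directSumTuple A B) W} ↔
      X ∈ Set.extremePoints ℝ {W | memD A W} ∧ Y ∈ Set.extremePoints ℝ {W | memD B W} := by
  simp only [memD_directSumTuple_iff]
  exact sumElim_mem_extremePoints_iff (s := {V | memD A V}) (t := {V | memD B V})

variable (A B X Y) in
theorem stmt_9_general :
    (IsArvesonExtreme (directSumTuple A B) (Sum.elim X Y) ↔
      IsArvesonExtreme A X ∧ IsArvesonExtreme B Y) ∧
    (Sum.elim X Y ∈ Set.extremePoints ℝ {W | memD (directSumTuple A B) W} ↔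
      X ∈ Set.extremePoints ℝ {W | memD A W} ∧
        Y ∈ Set.extremePoints ℝ {W | memD B W}) :=
  ⟨isArvesonExtreme_directSumTuple_iff, mem_extremePoints_directSumTuple_iff⟩

end FreeSpectrahedron

/-- For bounded free spectrahedra `D_A`, `D_B` and `(X,Y)` in level `n` of `D_A × D_B`:
`(X,Y)` is Arveson extreme in `D_A × D_B` iff `X` and `Y` are Arveson extreme in `D_A`
and `D_B`; and `(X,Y)` is a Euclidean extreme point of `(D_A × D_B)(n)` iff `X` and `Y`
are extreme points of `D_A(n)` and `D_B(n)`. -/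
theorem stmt_9 {g h dA dB n : ℕ} (hn : 1 ≤ n)
    (A : Fin g → Matrix (Fin dA) (Fin dA) ℂ) (B : Fin h → Matrix (Fin dB) (Fin dB) ℂ)
    (hAH : ∀ i, (A i).IsHermitian) (hBH : ∀ i, (B i).IsHermitian)
    (hA : BoundedD A) (hB : BoundedD B)
    (X : Fin g → Matrix (Fin n) (Fin n) ℂ) (Y : Fin h → Matrix (Fin n) (Fin n) ℂ)
    (hX : memD A X) (hY : memD B Y) :
    (IsArvesonExtreme (prodTuple A B) (Sum.elim X Y) ↔
      IsArvesonExtreme A X ∧ IsArvesonExtreme B Y) ∧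
    (Sum.elim X Y ∈ Set.extremePoints ℝ {W | memD (prodTuple A B) W} ↔
      X ∈ Set.extremePoints ℝ {W | memD A W} ∧
        Y ∈ Set.extremePoints ℝ {W | memD B W}) :=
  stmt_9_general A B X Y
end

section
/- Let D_S be a bounded free simplex in g variables with defining matrices S_j = diag(s_{1,j},…,s_{g+1,j}), and let X ∈ D_S(2) be a Euclidean extreme point of D_S(2) (a tuple of 2×2 complex Hermitian matrices). Then either (a) for every ℓ ∈ {1,…,g+1} the matrix I_2 − Σ_{j=1}^g s_{ℓ,j} X_j has nonzero kernel, or (b) there exists ℓ_0 ∈ {1,…,g+1} such that I_2 − Σ_{j=1}^g s_{ℓ,j} X_j = 0 for every ℓ ≠ ℓ_0; and in case (b) there exists an extreme point x = (x_1,…,x_g) of the convex set D_S(1) ⊆ ℝ^g such that X_j = x_j·I_2 for all j. -/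
open Matrix
open scoped Kronecker ComplexOrder

/-- The real-diagonal defining tuple of a free simplex in `g` variables, determined by the
diagonal entries `σ j : Fin (g+1) → ℝ`. -/
noncomputable def simplexPencil {g : ℕ} (σ : Fin g → Fin (g + 1) → ℝ) :
    Fin g → Matrix (Fin (g + 1)) (Fin (g + 1)) ℂ :=
  fun j => Matrix.diagonal fun p => ((σ j p : ℝ) : ℂ)

/-!
Write `Q ℓ = I - ∑ j, σ j ℓ • X j` for the `ℓ`-th block of the pencil at `X`. If every `Q ℓ` is
singular we are in the first case. Otherwise some `Q ℓ₀` is positive definite, so it stays positive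
under every small Hermitian perturbation. Hence extremality of `X` forbids every nonzero Hermitian
direction `V` for which all other blocks survive a step in both directions. This is used for three
kinds of directions:

* `V j = y j • I` with the `y`-combination of every row but `ℓ₀` zero: these rows separate points
  of `ℝ^g`, and as there are only `g` of them they are a basis of the dual space.
* `V j = y j • Q ℓ₁`, where `y` is dual to the row `ℓ₁ ≠ ℓ₀`: only the blocks `ℓ₀` and `ℓ₁` move,
  and the latter becomes `(1 ∓ t) • Q ℓ₁`; so `Q ℓ₁ = 0`.
* `V = X - x • I`, where `x` is the vertex at which all rows but `ℓ₀` equal `1`: so `X = x • I`.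
-/

open Filter Topology

section ExtremePoints

theorem eq_zero_of_add_mem_of_sub_mem_of_mem_extremePoints {𝕜 E : Type*} [Field 𝕜]
    [LinearOrder 𝕜] [IsStrictOrderedRing 𝕜] [AddCommGroup E] [Module 𝕜 E] {A : Set E} {x v : E}
    (hx : x ∈ A.extremePoints 𝕜) (hadd : x + v ∈ A) (hsub : x - v ∈ A) : v = 0 := by
  have : Invertible (2 : 𝕜) := invertibleOfNonzero two_ne_zero
  exact add_eq_left.1 (hx.2 hadd hsub (mem_openSegment_add_sub x v))

theorem mem_extremePoints_preimage {𝕜 E F : Type*} [Ring 𝕜] [PartialOrder 𝕜] [IsOrderedRing 𝕜]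
    [AddCommGroup E] [Module 𝕜 E] [AddCommGroup F] [Module 𝕜 F] {f : E →ₗ[𝕜] F}
    (hf : Function.Injective f) {B : Set F} {x : E} (hx : f x ∈ B.extremePoints 𝕜) :
    x ∈ (f ⁻¹' B).extremePoints 𝕜 := by
  refine ⟨hx.1, fun u hu v hv hxuv => hf (hx.2 hu hv ?_)⟩
  exact image_openSegment 𝕜 f.toAffineMap u v ▸ Set.mem_image_of_mem f hxuv

end ExtremePoints

section Positivity

theorem eventually_nonneg_add_smul {A : Type*} [CStarAlgebra A] [PartialOrder A]
    [StarOrderedRing A] {a b : A} (ha : IsStrictlyPositive a) (hb : IsSelfAdjoint b) :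
    ∀ᶠ t : ℝ in 𝓝 0, 0 ≤ a + t • b := by
  nontriviality A
  obtain ⟨r, hr, hra⟩ := (CFC.exists_pos_algebraMap_le_iff ha.isSelfAdjoint).2
    fun _ hx => ha.spectrum_pos hx
  have hcont : Tendsto (fun t : ℝ => ‖t • b‖) (𝓝 0) (𝓝 0) :=
    (by fun_prop : Continuous fun t : ℝ => ‖t • b‖).tendsto' 0 0 (by simp)
  filter_upwards [hcont.eventually_le_const hr] with t ht
  have htb : -algebraMap ℝ A ‖t • b‖ ≤ t • b :=
    ((IsSelfAdjoint.all t).smul hb).neg_algebraMap_norm_le_self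
  calc (0 : A) ≤ algebraMap ℝ A r + -algebraMap ℝ A ‖t • b‖ := by
        rw [← sub_eq_add_neg, sub_nonneg]
        exact algebraMap_mono A ht
    _ ≤ a + t • b := add_le_add hra htb

variable {m : Type*}

open scoped MatrixOrder Matrix.Norms.L2Operator in
theorem eventually_posSemidef_add_smul [Finite m] {P Q : Matrix m m ℂ} (hP : P.PosDef)
    (hQ : Q.IsHermitian) : ∀ᶠ t : ℝ in 𝓝 0, (P + t • Q).PosSemidef := by
  classical
  have := Fintype.ofFinite m
  simpa only [nonneg_iff_posSemidef] using
    eventually_nonneg_add_smul hP.isStrictlyPositive hQ.isSelfAdjoint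

variable {𝕜 : Type*} [RCLike 𝕜]

theorem posSemidef_add_smul_of_abs_le_one {P Q : Matrix m m 𝕜} (hadd : (P + Q).PosSemidef)
    (hsub : (P - Q).PosSemidef) {t : ℝ} (ht : |t| ≤ 1) : (P + t • Q).PosSemidef := by
  obtain ⟨hl, hr⟩ := abs_le.1 ht
  convert (hadd.smul (by linarith : 0 ≤ (1 + t) / 2)).add
    (hsub.smul (by linarith : 0 ≤ (1 - t) / 2)) using 1
  module

theorem posSemidef_smul_one_iff [DecidableEq m] [Nonempty m] {c : ℝ} :
    (c • (1 : Matrix m m 𝕜)).PosSemidef ↔ 0 ≤ c := by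
  refine ⟨fun h => ?_, fun h => PosSemidef.one.smul h⟩
  simpa [RCLike.real_smul_eq_coe_mul] using h.diag_nonneg (i := Classical.arbitrary m)

open scoped MatrixOrder in
theorem posSemidef_blockDiagonal_iff [Finite m] {κ : Type*} [Finite κ] [DecidableEq κ]
    {M : κ → Matrix m m 𝕜} : (blockDiagonal M).PosSemidef ↔ ∀ ℓ, (M ℓ).PosSemidef := by
  classical
  have := Fintype.ofFinite m
  have := Fintype.ofFinite κ
  refine ⟨fun h ℓ => ?_, fun h => ?_⟩
  · convert h.submatrix fun a => (a, ℓ)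
    ext a b
    simp
  · choose B hB using fun ℓ => CStarAlgebra.nonneg_iff_eq_star_mul_self.1 (h ℓ).nonneg
    rw [show M = fun ℓ => (B ℓ)ᴴ * B ℓ from funext hB, blockDiagonal_mul,
      ← blockDiagonal_conjTranspose]
    exact posSemidef_conjTranspose_mul_self _

end Positivity

section RowForm

variable {ι κ : Type*} [Fintype ι]

section CommSemiring

variable {R E : Type*} [CommSemiring R] [AddCommMonoid E] [Module R E]

/-- The linear form `∑ j, σ j ℓ • W j` given by the `ℓ`-th row of a free polytope, evaluated on
tuples in an arbitrary module so that it applies to points of `ℝ^g` and to matrix tuples alike. -/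
def rowForm (σ : ι → κ → R) (ℓ : κ) : (ι → E) →ₗ[R] E where
  toFun W := ∑ j, σ j ℓ • W j
  map_add' V W := by simp only [Pi.add_apply, smul_add, Finset.sum_add_distrib]
  map_smul' c W := by
    simp only [Pi.smul_apply, Finset.smul_sum, RingHom.id_apply, smul_comm c]

theorem rowForm_apply (σ : ι → κ → R) (ℓ : κ) (W : ι → E) :
    rowForm σ ℓ W = ∑ j, σ j ℓ • W j := rfl

theorem rowForm_smul_const (σ : ι → κ → R) (ℓ : κ) (y : ι → R) (Q : E) :
    rowForm σ ℓ (fun j => y j • Q) = rowForm σ ℓ y • Q := by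
  simp only [rowForm_apply, Finset.sum_smul, smul_assoc]

end CommSemiring

theorem exists_rowForm_eq {K : Type*} [Field K] [Fintype κ]
    (hcard : Fintype.card κ ≤ Fintype.card ι + 1) {σ : ι → κ → K} {ℓ₀ : κ}
    (hinj : ∀ y : ι → K, (∀ ℓ, ℓ ≠ ℓ₀ → rowForm σ ℓ y = 0) → y = 0) (b : κ → K) :
    ∃ y : ι → K, ∀ ℓ, ℓ ≠ ℓ₀ → rowForm σ ℓ y = b ℓ := by
  classical
  let L : (ι → K) →ₗ[K] ({ℓ // ℓ ≠ ℓ₀} → K) := LinearMap.pi fun ℓ => rowForm σ ℓ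
  have hL : Function.Injective L := (injective_iff_map_eq_zero L).2 fun y hy =>
    hinj y fun ℓ hℓ => congrFun hy ⟨ℓ, hℓ⟩
  have hdim : Module.finrank K (ι → K) = Module.finrank K ({ℓ // ℓ ≠ ℓ₀} → K) := by
    refine (LinearMap.finrank_le_finrank_of_injective hL).antisymm ?_
    simp only [Module.finrank_fintype_fun_eq_card, ne_eq, Fintype.card_subtype_compl,
      Fintype.card_subtype_eq]
    lia
  obtain ⟨y, hy⟩ := (LinearMap.injective_iff_surjective_of_finrank_eq_finrank hdim).1 hL
    fun ℓ => b ℓ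
  exact ⟨y, fun ℓ hℓ => congrFun hy ⟨ℓ, hℓ⟩⟩

end RowForm

section FreePolytope

variable {ι κ m : Type*} [Fintype ι]

theorem isHermitian_rowForm (σ : ι → κ → ℝ) (ℓ : κ) {V : ι → Matrix m m ℂ}
    (hV : ∀ j, (V j).IsHermitian) : (rowForm σ ℓ V).IsHermitian :=
  isSelfAdjoint_sum _ fun j _ => (IsSelfAdjoint.all (σ j ℓ)).smul (hV j).isSelfAdjoint

variable [DecidableEq κ] [DecidableEq m]

/-- The defining tuple of the free polytope with rows `ℓ ↦ (σ j ℓ)_j`: `simplexPencil` for any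
numbers of variables and of rows. -/
noncomputable def polytopePencil (σ : ι → κ → ℝ) : ι → Matrix κ κ ℂ :=
  fun j => diagonal fun ℓ => ((σ j ℓ : ℝ) : ℂ)

variable {σ : ι → κ → ℝ} {X V : ι → Matrix m m ℂ} {ℓ₀ : κ}

theorem one_sub_sum_polytopePencil_kronecker (σ : ι → κ → ℝ) (W : ι → Matrix m m ℂ) :
    1 - ∑ j, polytopePencil σ j ⊗ₖ W j =
      (blockDiagonal fun ℓ => 1 - rowForm σ ℓ W).submatrix Prod.swap Prod.swap := by
  ext ⟨p, a⟩ ⟨q, b⟩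
  by_cases h : p = q
  · subst h
    simp [polytopePencil, rowForm_apply, Matrix.sum_apply, Matrix.one_apply]
  · simp [polytopePencil, Matrix.sum_apply, blockDiagonal_apply, h]

theorem posSemidef_one_sub_sum_smul_diagonal_iff {y : ι → ℝ} :
    (1 - ∑ j, y j • diagonal (σ j)).PosSemidef ↔ ∀ ℓ, 0 ≤ 1 - rowForm σ ℓ y := by
  have hdiag : 1 - ∑ j, y j • diagonal (σ j) = diagonal fun ℓ => 1 - rowForm σ ℓ y := by
    ext p q
    by_cases h : p = q
    · subst h
      simp [rowForm_apply, Matrix.sum_apply, mul_comm]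
    · simp [Matrix.sum_apply, h]
  rw [hdiag, posSemidef_diagonal_iff]

variable [Fintype κ] [Fintype m]

theorem memD_polytopePencil_iff {W : ι → Matrix m m ℂ} :
    memD (polytopePencil σ) W ↔
      (∀ j, (W j).IsHermitian) ∧ ∀ ℓ, (1 - rowForm σ ℓ W).PosSemidef := by
  rw [memD, one_sub_sum_polytopePencil_kronecker, ← posSemidef_blockDiagonal_iff]
  exact and_congr_right' (posSemidef_submatrix_equiv (Equiv.prodComm κ m))

theorem memD_polytopePencil_smul_one_iff [Nonempty m] {y : ι → ℝ} :
    memD (polytopePencil σ) (fun j => y j • (1 : Matrix m m ℂ)) ↔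
      (1 - ∑ j, y j • diagonal (σ j)).PosSemidef := by
  have hherm (j : ι) : (y j • (1 : Matrix m m ℂ)).IsHermitian :=
    isHermitian_one.smul (IsSelfAdjoint.all (y j))
  have hblock (ℓ : κ) : 1 - rowForm σ ℓ (fun j => y j • (1 : Matrix m m ℂ)) =
      (1 - rowForm σ ℓ y) • (1 : Matrix m m ℂ) := by
    rw [rowForm_smul_const, sub_smul, one_smul]
  simp only [memD_polytopePencil_iff, hherm, implies_true, true_and, hblock,
    posSemidef_smul_one_iff, posSemidef_one_sub_sum_smul_diagonal_iff]

theorem eventually_memD_add_smul (hX : memD (polytopePencil σ) X)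
    (hℓ₀ : (1 - rowForm σ ℓ₀ X).PosDef) (hV : ∀ j, (V j).IsHermitian)
    (hadd : ∀ ℓ, ℓ ≠ ℓ₀ → (1 - rowForm σ ℓ X + rowForm σ ℓ V).PosSemidef)
    (hsub : ∀ ℓ, ℓ ≠ ℓ₀ → (1 - rowForm σ ℓ X - rowForm σ ℓ V).PosSemidef) :
    ∀ᶠ t : ℝ in 𝓝 0, memD (polytopePencil σ) (X + t • V) := by
  have hsmall : ∀ᶠ t : ℝ in 𝓝 0, |t| ≤ 1 :=
    (continuous_abs.tendsto' (0 : ℝ) 0 abs_zero).eventually_le_const one_pos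
  filter_upwards [hsmall, eventually_posSemidef_add_smul hℓ₀ (isHermitian_rowForm σ ℓ₀ hV).neg]
    with t ht ht₀
  refine memD_polytopePencil_iff.2 ⟨fun j => ?_, fun ℓ => ?_⟩
  · exact (hX.1 j).add ((hV j).smul (IsSelfAdjoint.all t))
  · rw [map_add, map_smul, ← sub_sub, sub_eq_add_neg _ (t • _), ← smul_neg]
    obtain rfl | hℓ := eq_or_ne ℓ ℓ₀
    · exact ht₀
    · refine posSemidef_add_smul_of_abs_le_one ?_ ?_ ht
      · rw [← sub_eq_add_neg]
        exact hsub ℓ hℓ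
      · rw [sub_neg_eq_add]
        exact hadd ℓ hℓ

theorem eq_zero_of_posDef_of_mem_extremePoints
    (hX : X ∈ Set.extremePoints ℝ {W | memD (polytopePencil σ) W})
    (hℓ₀ : (1 - rowForm σ ℓ₀ X).PosDef) (hV : ∀ j, (V j).IsHermitian)
    (hadd : ∀ ℓ, ℓ ≠ ℓ₀ → (1 - rowForm σ ℓ X + rowForm σ ℓ V).PosSemidef)
    (hsub : ∀ ℓ, ℓ ≠ ℓ₀ → (1 - rowForm σ ℓ X - rowForm σ ℓ V).PosSemidef) : V = 0 := by
  have hmem := eventually_memD_add_smul hX.1 hℓ₀ hV hadd hsub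
  have hmem_neg := (continuous_neg.tendsto' (0 : ℝ) 0 neg_zero).eventually hmem
  obtain ⟨t, ⟨htadd, htneg⟩, ht : 0 < t⟩ :=
    (((hmem.and hmem_neg).filter_mono nhdsWithin_le_nhds).and
      (self_mem_nhdsWithin : Set.Ioi (0 : ℝ) ∈ 𝓝[>] 0)).exists
  rw [neg_smul, ← sub_eq_add_neg] at htneg
  have htV := eq_zero_of_add_mem_of_sub_mem_of_mem_extremePoints hX htadd htneg
  exact (smul_eq_zero.1 htV).resolve_left ht.ne'

theorem eq_zero_of_rowForm_eq_zero (hX : X ∈ Set.extremePoints ℝ {W | memD (polytopePencil σ) W})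
    (hℓ₀ : (1 - rowForm σ ℓ₀ X).PosDef) (hV : ∀ j, (V j).IsHermitian)
    (hrow : ∀ ℓ, ℓ ≠ ℓ₀ → rowForm σ ℓ V = 0) : V = 0 := by
  have hblock := (memD_polytopePencil_iff.1 hX.1).2
  refine eq_zero_of_posDef_of_mem_extremePoints hX hℓ₀ hV (fun ℓ hℓ => ?_) fun ℓ hℓ => ?_
  · rw [hrow ℓ hℓ, add_zero]
    exact hblock ℓ
  · rw [hrow ℓ hℓ, sub_zero]
    exact hblock ℓ

theorem eq_zero_of_rowForm_real_eq_zero [Nonempty m]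
    (hX : X ∈ Set.extremePoints ℝ {W | memD (polytopePencil σ) W})
    (hℓ₀ : (1 - rowForm σ ℓ₀ X).PosDef) (y : ι → ℝ)
    (hrow : ∀ ℓ, ℓ ≠ ℓ₀ → rowForm σ ℓ y = 0) : y = 0 := by
  have hV : (fun j => y j • (1 : Matrix m m ℂ)) = 0 :=
    eq_zero_of_rowForm_eq_zero hX hℓ₀ (fun j => isHermitian_one.smul (IsSelfAdjoint.all (y j)))
      fun ℓ hℓ => by rw [rowForm_smul_const, hrow ℓ hℓ, zero_smul]
  exact funext fun j => (smul_eq_zero.1 (congrFun hV j)).resolve_right one_ne_zero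

theorem one_sub_rowForm_eq_zero_of_ne [Nonempty m]
    (hcard : Fintype.card κ ≤ Fintype.card ι + 1)
    (hX : X ∈ Set.extremePoints ℝ {W | memD (polytopePencil σ) W})
    (hℓ₀ : (1 - rowForm σ ℓ₀ X).PosDef) {ℓ₁ : κ} (hne : ℓ₁ ≠ ℓ₀) :
    1 - rowForm σ ℓ₁ X = 0 := by
  have hblock := (memD_polytopePencil_iff.1 hX.1).2
  obtain ⟨y, hy⟩ := exists_rowForm_eq hcard (eq_zero_of_rowForm_real_eq_zero hX hℓ₀)
    (Pi.single ℓ₁ 1)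
  set V : ι → Matrix m m ℂ := fun j => y j • (1 - rowForm σ ℓ₁ X) with hV_def
  have hrow₁ : rowForm σ ℓ₁ V = 1 - rowForm σ ℓ₁ X := by
    rw [hV_def, rowForm_smul_const, hy ℓ₁ hne, Pi.single_eq_same, one_smul]
  have hrow {ℓ : κ} (hℓ : ℓ ≠ ℓ₀) (hℓ₁ : ℓ ≠ ℓ₁) : rowForm σ ℓ V = 0 := by
    rw [hV_def, rowForm_smul_const, hy ℓ hℓ, Pi.single_eq_of_ne hℓ₁, zero_smul]
  have hV : V = 0 := by
    refine eq_zero_of_posDef_of_mem_extremePoints hX hℓ₀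
      (fun j => (hblock ℓ₁).isHermitian.smul (IsSelfAdjoint.all (y j)))
      (fun ℓ hℓ => ?_) fun ℓ hℓ => ?_ <;> obtain rfl | hℓ₁ := eq_or_ne ℓ ℓ₁
    · rw [hrow₁]
      exact (hblock ℓ).add (hblock ℓ)
    · rw [hrow hℓ hℓ₁, add_zero]
      exact hblock ℓ
    · rw [hrow₁, sub_self]
      exact .zero
    · rw [hrow hℓ hℓ₁, sub_zero]
      exact hblock ℓ
  rw [← hrow₁, hV, map_zero]

theorem exists_forall_eq_smul_one_of_mem_extremePoints [Nonempty m]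
    (hcard : Fintype.card κ ≤ Fintype.card ι + 1)
    (hX : X ∈ Set.extremePoints ℝ {W | memD (polytopePencil σ) W})
    (hℓ₀ : (1 - rowForm σ ℓ₀ X).PosDef) :
    ∃ x : ι → ℝ, ∀ j, X j = x j • (1 : Matrix m m ℂ) := by
  obtain ⟨x, hx⟩ := exists_rowForm_eq hcard (eq_zero_of_rowForm_real_eq_zero hX hℓ₀) 1
  have hV : X - (fun j => x j • (1 : Matrix m m ℂ)) = 0 := by
    refine eq_zero_of_rowForm_eq_zero hX hℓ₀
      (fun j => (hX.1.1 j).sub (isHermitian_one.smul (IsSelfAdjoint.all (x j)))) fun ℓ hℓ => ?_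
    rw [map_sub, rowForm_smul_const, hx ℓ hℓ, Pi.one_apply, one_smul, ← neg_sub,
      one_sub_rowForm_eq_zero_of_ne hcard hX hℓ₀ hℓ, neg_zero]
  exact ⟨x, congrFun (sub_eq_zero.1 hV)⟩

theorem mem_extremePoints_of_smul_one_mem_extremePoints [Nonempty m] {x : ι → ℝ}
    (hx : (fun j => x j • (1 : Matrix m m ℂ)) ∈
      Set.extremePoints ℝ {W | memD (polytopePencil σ) W}) :
    x ∈ Set.extremePoints ℝ {y | (1 - ∑ j, y j • diagonal (σ j)).PosSemidef} := by
  let f : (ι → ℝ) →ₗ[ℝ] ι → Matrix m m ℂ :=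
    LinearMap.pi fun j => (LinearMap.proj j).smulRight 1
  have hf : Function.Injective f := fun u v huv =>
    funext fun j => smul_left_injective ℝ one_ne_zero (congrFun huv j)
  have hpre : f ⁻¹' {W | memD (polytopePencil σ) W} =
      {y | (1 - ∑ j, y j • diagonal (σ j)).PosSemidef} :=
    Set.ext fun _ => memD_polytopePencil_smul_one_iff
  exact hpre ▸ mem_extremePoints_preimage hf hx

end FreePolytope

theorem stmt_15_general {ι κ m : Type*} [Fintype ι] [Fintype κ] [DecidableEq κ] [Fintype m]
    [DecidableEq m] [Nonempty m] (hcard : Fintype.card κ ≤ Fintype.card ι + 1)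
    (σ : ι → κ → ℝ) (X : ι → Matrix m m ℂ)
    (hX : X ∈ Set.extremePoints ℝ {W | memD (polytopePencil σ) W}) :
    (∀ ℓ, ∃ v : m → ℂ, v ≠ 0 ∧ (1 - ∑ j, σ j ℓ • X j) *ᵥ v = 0) ∨
    (∃ ℓ₀, (∀ ℓ, ℓ ≠ ℓ₀ → 1 - ∑ j, σ j ℓ • X j = 0) ∧
      ∃ x ∈ Set.extremePoints ℝ {y : ι → ℝ | (1 - ∑ j, y j • diagonal (σ j)).PosSemidef},
        ∀ j, X j = x j • (1 : Matrix m m ℂ)) := by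
  simp only [← rowForm_apply, exists_mulVec_eq_zero_iff]
  refine or_iff_not_imp_left.2 fun hdet => ?_
  obtain ⟨ℓ₀, hdet₀⟩ := not_forall.1 hdet
  have hℓ₀ : (1 - rowForm σ ℓ₀ X).PosDef :=
    ((memD_polytopePencil_iff.1 hX.1).2 ℓ₀).posDef_iff_det_ne_zero.2 hdet₀
  obtain ⟨x, hXx⟩ := exists_forall_eq_smul_one_of_mem_extremePoints hcard hX hℓ₀
  refine ⟨ℓ₀, fun ℓ hℓ => one_sub_rowForm_eq_zero_of_ne hcard hX hℓ₀ hℓ, x, ?_, hXx⟩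
  exact mem_extremePoints_of_smul_one_mem_extremePoints (funext hXx ▸ hX)

/-- Let `D_S` be a bounded free simplex with defining matrices `S_j = diag(s_{1,j},…,s_{g+1,j})`
and let `X ∈ D_S(2)` be a Euclidean extreme point of `D_S(2)`.  Then either every matrix
`I_2 − Σ_j s_{ℓ,j} X_j` has nonzero kernel, or all but one of them vanish; and in the latter
case `X = x·I_2` for an extreme point `x` of `D_S(1)`. -/
theorem stmt_15 {g : ℕ} (s : Fin g → Fin (g + 1) → ℝ)
    (hbdd : BoundedD (simplexPencil s))
    (X : Fin g → Matrix (Fin 2) (Fin 2) ℂ)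
    (hXeuc : X ∈ Set.extremePoints ℝ
      {W : Fin g → Matrix (Fin 2) (Fin 2) ℂ | memD (simplexPencil s) W}) :
    (∀ ℓ : Fin (g + 1), ∃ v : Fin 2 → ℂ, v ≠ 0 ∧
        ((1 : Matrix (Fin 2) (Fin 2) ℂ) - ∑ j, s j ℓ • X j).mulVec v = 0) ∨
    (∃ ℓ₀ : Fin (g + 1),
      (∀ ℓ, ℓ ≠ ℓ₀ → (1 : Matrix (Fin 2) (Fin 2) ℂ) - ∑ j, s j ℓ • X j = 0) ∧
      ∃ x ∈ Set.extremePoints ℝ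
          {y : Fin g → ℝ | ((1 : Matrix (Fin (g + 1)) (Fin (g + 1)) ℝ)
              - ∑ j, y j • Matrix.diagonal (s j)).PosSemidef},
        ∀ j, X j = x j • (1 : Matrix (Fin 2) (Fin 2) ℂ)) := by
  exact stmt_15_general (by simp) s X hXeuc
end
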